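/- arXiv:2503.07615 — 11 statements merged into one kernel-verified Lean document; each statement's English description precedes it below -/
import Mathlib

section
/- Let a, b, c, y, z be rational numbers with abc ≠ 0 and b·y + c ≠ 0 satisfying a·b·y·z² + a·c·y² + 2·a·c·y·z + a·c·z² + b·c·y = 0. Define X = 3abc·(3ac·y + 6ac·z − b²·y + 2bc)/(by + c) and Y = 27a²bc²·(abc·y² + 3abc·y·z − b³·y·z − ac²·y − ac²·z + b²c·y − b²c·z − bc²)/(by + c)². Then Y² = X³ + 27a²b²c²(3ac − b²)·X + 27a³b⁴c³(9ac − 2b²). -/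
theorem stmt_1 (a b c y z : ℚ) (habc : a * b * c ≠ 0) (hbyc : b * y + c ≠ 0)
    (hC : a * b * y * z ^ 2 + a * c * y ^ 2 + 2 * a * c * y * z + a * c * z ^ 2
      + b * c * y = 0) :
    let X : ℚ := 3 * a * b * c * (3 * a * c * y + 6 * a * c * z - b ^ 2 * y + 2 * b * c)
      / (b * y + c)
    let Y : ℚ := 27 * a ^ 2 * b * c ^ 2 * (a * b * c * y ^ 2 + 3 * a * b * c * y * z
      - b ^ 3 * y * z - a * c ^ 2 * y - a * c ^ 2 * z + b ^ 2 * c * y - b ^ 2 * c * z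
      - b * c ^ 2) / (b * y + c) ^ 2
    Y ^ 2 = X ^ 3 + 27 * a ^ 2 * b ^ 2 * c ^ 2 * (3 * a * c - b ^ 2) * X
      + 27 * a ^ 3 * b ^ 4 * c ^ 3 * (9 * a * c - 2 * b ^ 2) := by
  intro X Y
  simp only [X, Y]
  -- Over the common denominator `(b * y + c) ^ 4`, the difference of the two sides has as
  -- numerator the defining polynomial of the curve times the cofactor below, which is the
  -- quotient found by polynomial division.
  rw [← sub_eq_zero]
  have key : ∀ D N M : ℚ, D ≠ 0 → ∀ k l : ℚ,
      (M / D ^ 2) ^ 2 - ((N / D) ^ 3 + k * (N / D) + l)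
        = (M ^ 2 - D * N ^ 3 - k * D ^ 3 * N - l * D ^ 4) / D ^ 4 := by
    intro D N M hD k l
    field_simp
    ring
  rw [key _ _ _ hbyc, div_eq_zero_iff]
  left
  linear_combination 729 * a ^ 3 * b ^ 2 * c ^ 4 * (-8 * a ^ 2 * b * c ^ 2 * z
    - 3 * a ^ 2 * b * c ^ 2 * y - 2 * a * b ^ 3 * c * y + b ^ 5 * y + a ^ 2 * c ^ 3
    - 6 * a * b ^ 2 * c ^ 2 + b ^ 4 * c) * hC
end

section
/- Let a, b, c, X, Y be rational numbers with abc ≠ 0 and X ≠ 9a²c² − 3ab²c satisfying Y² = X³ + 27a²b²c²(3ac − b²)·X + 27a³b⁴c³(9ac − 2b²). Define y = −c·(108a³b²c³ − 18a²b⁴c² + 9X·a²c² − 3X·ab²c + 6Y·ac + X²)/(b·(X − 9a²c² + 3ab²c)²) and z = −(9a²b²c² + 3X·ac + Y)/(3ab·(X − 9a²c² + 3ab²c)). Then a·b·y·z² + a·c·y² + 2·a·c·y·z + a·c·z² + b·c·y = 0. -/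
/-! With `D = X - 9a²c² + 3ab²c`, write `y = -cP / (bD²)` and `z = -Q / (3abD)`, where `P` and `Q`
are linear in `Y`. Clearing denominators turns the equation of the curve into
`-PQ² + 9a²c²P² + 6acPQD + Q²D² - 9ab²cPD² = 0`. The left side is a cubic in `Y`, divisible by the
equation `Y² - f(X)` of the elliptic curve; the quotient is linear in `Y`. -/

theorem stmt_2 (a b c X Y : ℚ) (habc : a * b * c ≠ 0)
    (hX : X ≠ 9 * a ^ 2 * c ^ 2 - 3 * a * b ^ 2 * c)
    (hE : Y ^ 2 = X ^ 3 + 27 * a ^ 2 * b ^ 2 * c ^ 2 * (3 * a * c - b ^ 2) * X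
      + 27 * a ^ 3 * b ^ 4 * c ^ 3 * (9 * a * c - 2 * b ^ 2)) :
    let y : ℚ := -(c * (108 * a ^ 3 * b ^ 2 * c ^ 3 - 18 * a ^ 2 * b ^ 4 * c ^ 2
      + 9 * X * a ^ 2 * c ^ 2 - 3 * X * a * b ^ 2 * c + 6 * Y * a * c + X ^ 2))
      / (b * (X - 9 * a ^ 2 * c ^ 2 + 3 * a * b ^ 2 * c) ^ 2)
    let z : ℚ := -(9 * a ^ 2 * b ^ 2 * c ^ 2 + 3 * X * a * c + Y)
      / (3 * a * b * (X - 9 * a ^ 2 * c ^ 2 + 3 * a * b ^ 2 * c))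
    a * b * y * z ^ 2 + a * c * y ^ 2 + 2 * a * c * y * z + a * c * z ^ 2
      + b * c * y = 0 := by
  intro y z
  have ha : a ≠ 0 := by rintro rfl; simp at habc
  have hb : b ≠ 0 := by rintro rfl; simp at habc
  obtain ⟨D, hD⟩ : ∃ D, D = X - 9 * a ^ 2 * c ^ 2 + 3 * a * b ^ 2 * c := ⟨_, rfl⟩
  have hD0 : D ≠ 0 := fun h => hX (by linarith)
  obtain ⟨P, hP⟩ : ∃ P, P = 108 * a ^ 3 * b ^ 2 * c ^ 3 - 18 * a ^ 2 * b ^ 4 * c ^ 2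
      + 9 * X * a ^ 2 * c ^ 2 - 3 * X * a * b ^ 2 * c + 6 * Y * a * c + X ^ 2 := ⟨_, rfl⟩
  obtain ⟨Q, hQ⟩ : ∃ Q, Q = 9 * a ^ 2 * b ^ 2 * c ^ 2 + 3 * X * a * c + Y := ⟨_, rfl⟩
  have key : -P * Q ^ 2 + 9 * a ^ 2 * c ^ 2 * P ^ 2 + 6 * a * c * P * Q * D + Q ^ 2 * D ^ 2
      - 9 * a * b ^ 2 * c * P * D ^ 2 = 0 := by
    subst hP hQ hD
    -- The coefficient is the quotient by `Y² - f(X)`: the `Y³` and `Y²` coefficients of the cubic.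
    linear_combination (-6 * a * c * Y
      - (108 * a ^ 3 * b ^ 2 * c ^ 3 - 18 * a ^ 2 * b ^ 4 * c ^ 2
        + 9 * X * a ^ 2 * c ^ 2 - 3 * X * a * b ^ 2 * c + X ^ 2)
      - 12 * a * c * (9 * a ^ 2 * b ^ 2 * c ^ 2 + 3 * X * a * c) + 324 * a ^ 4 * c ^ 4
      + 36 * a ^ 2 * c ^ 2 * (X - 9 * a ^ 2 * c ^ 2 + 3 * a * b ^ 2 * c)
      + (X - 9 * a ^ 2 * c ^ 2 + 3 * a * b ^ 2 * c) ^ 2) * hE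
  have hy : y = -(c * P) / (b * D ^ 2) := by rw [hP, hD]
  have hz : z = -Q / (3 * a * b * D) := by rw [hQ, hD]
  have hclear : a * b * y * z ^ 2 + a * c * y ^ 2 + 2 * a * c * y * z + a * c * z ^ 2 + b * c * y
      = c / (9 * a * b ^ 2 * D ^ 4) * (-P * Q ^ 2 + 9 * a ^ 2 * c ^ 2 * P ^ 2
        + 6 * a * c * P * Q * D + Q ^ 2 * D ^ 2 - 9 * a * b ^ 2 * c * P * D ^ 2) := by
    rw [hy, hz]
    field_simp
    ring
  rw [hclear, key, mul_zero]
end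

section
/- The set of rational solutions (V, U) of the equation U² = V³ − 108·V + 297 is exactly {(3, 0), (−6, 27), (−6, −27), (12, 27), (12, −27)}. -/
/-!
The substitution `V = 9x + 3`, `U = 27y` turns the curve into `y² = x(x² + x - 1)`. Writing
`x = m / n` in lowest terms, the integers `m`, `n` and `m² + mn - n²` are pairwise coprime with
product a square, so `n = e²`, `m = ±M²`, and one of `(M, e)`, `(e, M)` is a coprime solution of
the quartic `N² = M⁴ + M²e² - e⁴`.

The quartic is solved by infinite descent on `|M|` (`quartic`). From
`(2M² + e²)² - 4N² = 5e⁴`, after removing powers of two, two coprime numbers have product `5f⁴`,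
so they are `u⁴` and `5v⁴` (`split_five`). Substituting back gives a Pythagorean triple with
hypotenuse `M`, whose parametrisation yields a solution `(b, a)` of the same quartic with
`2M = a⁴ + b⁴` if `e` is odd (`descent_odd`) and `M = a⁴ + b⁴` if `e` is even (`descent_even`).
Hence the only coprime solutions have `e = 0` or `M² = e²`, that is `x ∈ {0, 1, -1}`.
-/

/-! ### Coprime factorisations of `5f⁴` -/

lemma isCoprime_two_of_odd {x : ℤ} (hx : Odd x) : IsCoprime x 2 := by
  obtain ⟨k, rfl⟩ := hx
  exact ⟨1, -k, by ring⟩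

lemma fourth_pow_of_mul {A B f : ℤ} (hc : IsCoprime A B) (hA : 0 ≤ A) (h : A * B = f ^ 4) :
    ∃ u : ℤ, A = u ^ 4 := by
  obtain ⟨d, hd⟩ := exists_associated_pow_of_mul_eq_pow' hc h
  refine ⟨d, ?_⟩
  have : 0 ≤ d ^ 4 := by positivity
  rcases Int.associated_iff.mp hd with h | h <;> omega

lemma split_five_aux {A B f : ℤ} (hc : IsCoprime (5 * A) B) (hA : 0 ≤ A) (hB : 0 ≤ B)
    (h : A * B = f ^ 4) :
    ∃ u v : ℤ, 5 * A + B = u ^ 4 + 5 * v ^ 4 ∧ u ^ 2 * v ^ 2 = f ^ 2 ∧ IsCoprime u v := by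
  have hc' : IsCoprime A B := hc.of_mul_left_right
  obtain ⟨v, rfl⟩ := fourth_pow_of_mul hc' hA h
  obtain ⟨u, rfl⟩ := fourth_pow_of_mul hc'.symm hB (by rw [mul_comm]; exact h)
  refine ⟨u, v, by ring, ?_, ?_⟩
  · have : (u ^ 2 * v ^ 2) ^ 2 = (f ^ 2) ^ 2 := by linear_combination h
    exact (sq_eq_sq₀ (by positivity) (by positivity)).mp this
  · exact ((IsCoprime.pow_iff (by norm_num) (by norm_num)).mp hc').symm

/-- If `AB = 5f⁴` with `A`, `B` nonnegative and coprime, then `{A, B} = {u⁴, 5v⁴}`; only the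
symmetric consequence for `A + B` is recorded. Coprimality of `A` and `B` follows from that of `f`
and `A + B`: a common prime `p` satisfies `p² ∣ 5f⁴`, so `p ∣ f`. -/
lemma split_five {A B f : ℤ} (hc : IsCoprime f (A + B)) (h : A * B = 5 * f ^ 4)
    (hs : 0 < A + B) :
    ∃ u v : ℤ, A + B = u ^ 4 + 5 * v ^ 4 ∧ u ^ 2 * v ^ 2 = f ^ 2 ∧ IsCoprime u v := by
  have h0 : 0 ≤ A * B := by rw [h]; positivity
  have hA : 0 ≤ A := by by_contra hA; nlinarith
  have hB : 0 ≤ B := by by_contra hB; nlinarith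
  have hAB : IsCoprime A B := by
    refine isCoprime_of_prime_dvd (by rintro ⟨rfl, rfl⟩; simp at hs) ?_
    intro p hp hpA hpB
    have hpf : ¬ p ∣ f := fun hpf =>
      hp.not_isUnit (hc.isUnit_of_dvd' hpf (dvd_add hpA hpB))
    have h2 : p * p ∣ 5 * f ^ 4 := h ▸ mul_dvd_mul hpA hpB
    have hcop : IsCoprime (p * p) (f ^ 4) := by
      have := (hp.coprime_iff_not_dvd).mpr hpf
      exact (this.mul_left this).pow_right
    have h5 : p * p ∣ 5 := hcop.dvd_of_dvd_mul_right h2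
    have hle : p * p ≤ 5 := Int.le_of_dvd (by norm_num) h5
    have h1 : p ≤ 2 := by nlinarith
    have h1' : -2 ≤ p := by nlinarith
    interval_cases p <;> revert h5 hp <;> norm_num <;>
      decide
  have h5 : (5 : ℤ) ∣ A * B := ⟨_, h⟩
  rcases (Int.prime_iff_natAbs_prime.mpr (by norm_num) : Prime (5 : ℤ)).dvd_or_dvd h5 with
    ⟨C, rfl⟩ | ⟨C, rfl⟩
  · exact split_five_aux hAB (by omega) hB (by linarith)
  · rw [add_comm A]
    exact split_five_aux hAB.symm (by omega) hA (by linarith)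

/-! ### Descent on `N² = M⁴ + M²e² - e⁴` -/

/-- Descent step for odd `e`: with `e² = u²v²` and `u² - v² = 2w`, the triple `(v², w, M)` is
Pythagorean, say `v² = m² - n²`, `w = 2mn`. Then `m - n = ±a²`, `m + n = ±b²`, and
`u² = v² + 2w` is the quartic in `(b, a)`. -/
lemma descent_odd {M e N : ℤ} (hM : 0 < M) (hc : IsCoprime M e) (he : e % 2 = 1)
    (h : N ^ 2 = M ^ 4 + M ^ 2 * e ^ 2 - e ^ 4) :
    ∃ a b c : ℤ, IsCoprime b a ∧ c ^ 2 = b ^ 4 + b ^ 2 * a ^ 2 - a ^ 4 ∧ a ≠ 0 ∧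
      2 * M = a ^ 4 + b ^ 4 := by
  have he4 : IsCoprime e 4 := by
    have : IsCoprime e 2 := isCoprime_two_of_odd (Int.odd_iff.mpr he)
    simpa using (this.mul_right this)
  obtain ⟨u, v, hs, hp, huv⟩ := split_five (A := 2 * M ^ 2 + e ^ 2 - 2 * N)
    (B := 2 * M ^ 2 + e ^ 2 + 2 * N) (f := e)
    (by
      have : IsCoprime e (4 * M ^ 2 + e * (2 * e)) :=
        (he4.mul_right hc.symm.pow_right).add_mul_left_right _
      convert this using 1; ring)
    (by linear_combination -4 * h) (by nlinarith [sq_nonneg e, pow_pos hM 2])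
  have hodd : Odd (u ^ 2 * v ^ 2) := by
    rw [hp]; exact (Int.odd_iff.mpr he).pow
  have hu : Odd u := by
    have := (Int.odd_mul.mp hodd).1
    exact (Int.odd_pow.mp this).resolve_right (by norm_num)
  have hv : Odd v := by
    have := (Int.odd_mul.mp hodd).2
    exact (Int.odd_pow.mp this).resolve_right (by norm_num)
  obtain ⟨w, hw⟩ : ∃ w, u ^ 2 - v ^ 2 = 2 * w := (hu.pow.sub_odd hv.pow).two_dvd
  have hpyth : PythagoreanTriple (v ^ 2) w M := by
    have : 4 * (v ^ 2 * v ^ 2 + w * w) = 4 * (M * M) := by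
      linear_combination -hs - 2 * hp - (u ^ 2 - v ^ 2 + 2 * w) * hw
    unfold PythagoreanTriple
    linarith
  have hcop : IsCoprime (v ^ 2) w := by
    have : IsCoprime (v ^ 2) (u ^ 2 + v ^ 2 * (-1)) :=
      (huv.symm.pow (m := 2) (n := 2)).add_mul_left_right _
    rw [show u ^ 2 + v ^ 2 * (-1) = 2 * w by linarith] at this
    exact this.of_mul_right_right
  obtain ⟨m, n, h1, h2, h3, h4, h5, -⟩ := hpyth.coprime_classification'
    (Int.isCoprime_iff_gcd_eq_one.mp hcop) (Int.odd_iff.mp hv.pow) hM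
  have hmn : IsCoprime m n := Int.isCoprime_iff_gcd_eq_one.mpr h4
  have hcmn : IsCoprime (m - n) (m + n) := by
    have h2 : IsCoprime (m - n) 2 := isCoprime_two_of_odd (Int.odd_iff.mpr (by omega))
    have h3 : IsCoprime (m - n) n := by
      have := hmn.symm.add_mul_left_right (-1)
      rw [show m + n * (-1) = m - n by ring] at this
      exact this.symm
    have := (h2.mul_right h3).add_mul_left_right 1
    rw [show 2 * n + (m - n) * 1 = m + n by ring] at this
    exact this
  obtain ⟨a, ha⟩ := Int.sq_of_isCoprime hcmn
    (show (m - n) * (m + n) = v ^ 2 by linarith)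
  obtain ⟨b, hb⟩ := Int.sq_of_isCoprime hcmn.symm
    (show (m + n) * (m - n) = v ^ 2 by linarith)
  have ha2 : (m - n) ^ 2 = a ^ 4 := by rcases ha with h | h <;> rw [h] <;> ring
  have hb2 : (m + n) ^ 2 = b ^ 4 := by rcases hb with h | h <;> rw [h] <;> ring
  have hvab : v ^ 2 = b ^ 2 * a ^ 2 := by
    refine (sq_eq_sq₀ (by positivity) (by positivity)).mp ?_
    calc (v ^ 2) ^ 2 = (m + n) ^ 2 * (m - n) ^ 2 := by rw [h1]; ring
      _ = _ := by rw [ha2, hb2]; ring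
  refine ⟨a, b, u, ?_, ?_, ?_, ?_⟩
  · have := hcmn.symm.pow (m := 2) (n := 2)
    rw [ha2, hb2] at this
    exact (IsCoprime.pow_iff (by norm_num) (by norm_num)).mp this
  · linear_combination hw + 2 * h2 + hvab + hb2 - ha2
  · rintro rfl
    have : v = 0 := by simpa using hvab
    simp [this] at hv
  · linear_combination 2 * h3 + ha2 + hb2

/-- Descent step for `e = 2f`: with `f² = u²v²`, the triple `(u² - v², 2v², M)` is Pythagorean,
say `u² - v² = m² - n²`, `v² = mn`. Then `m = ±b²`, `n = ±a²`, and `u² = v² + m² - n²` is the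
quartic in `(b, a)`. -/
lemma descent_even {M e N : ℤ} (hM : 0 < M) (hc : IsCoprime M e) (he : e % 2 = 0)
    (h : N ^ 2 = M ^ 4 + M ^ 2 * e ^ 2 - e ^ 4) :
    ∃ a b c : ℤ, IsCoprime b a ∧ c ^ 2 = b ^ 4 + b ^ 2 * a ^ 2 - a ^ 4 ∧ (a = 0 → e = 0) ∧
      M = a ^ 4 + b ^ 4 ∧ Odd M := by
  obtain ⟨f, rfl⟩ : ∃ f, e = 2 * f := ⟨e / 2, by omega⟩
  have hMo : Odd M := by
    rw [← Int.not_even_iff_odd]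
    intro hE
    have := hc.of_mul_right_left.isUnit_of_dvd' hE.two_dvd dvd_rfl
    exact absurd this (by decide)
  have hNo : Odd N := by
    have : Odd (N ^ 2) := by
      rw [h, show M ^ 4 + M ^ 2 * (2 * f) ^ 2 - (2 * f) ^ 4
        = M ^ 4 + 2 * (2 * M ^ 2 * f ^ 2 - 8 * f ^ 4) by ring]
      exact hMo.pow.add_even (even_two_mul _)
    exact (Int.odd_pow.mp this).resolve_right (by norm_num)
  obtain ⟨t, ht⟩ : ∃ t, M ^ 2 - N = 2 * t := (hMo.pow.sub_odd hNo).two_dvd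
  have hcf : IsCoprime f M := hc.of_mul_right_right.symm
  obtain ⟨u, v, hs, hp, huv⟩ := split_five (A := t + f ^ 2)
    (B := t + f ^ 2 + N) (f := f)
    (by
      have : IsCoprime f (M ^ 2 + f * (2 * f)) := hcf.pow_right.add_mul_left_right _
      convert this using 1; linear_combination -ht)
    (by
      have : 4 * ((t + f ^ 2) * (t + f ^ 2 + N)) = 4 * (5 * f ^ 4) := by
        linear_combination -h - (M ^ 2 + N + 2 * t + 4 * f ^ 2) * ht
      linarith)
    (by nlinarith [sq_nonneg f, pow_pos hM 2])
  have hM2 : M ^ 2 = (u ^ 2 - v ^ 2) ^ 2 + (2 * v ^ 2) ^ 2 := by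
    linear_combination hs + 2 * hp + ht
  have hodd : Odd (u ^ 2 - v ^ 2) := by
    have h1 : Odd ((u ^ 2 - v ^ 2) ^ 2) := by
      rw [show (u ^ 2 - v ^ 2) ^ 2 = M ^ 2 - 2 * (2 * v ^ 4) by linear_combination -hM2]
      exact hMo.pow.sub_even (even_two_mul _)
    exact (Int.odd_pow.mp h1).resolve_right (by norm_num)
  have hpyth : PythagoreanTriple (u ^ 2 - v ^ 2) (2 * v ^ 2) M := by
    unfold PythagoreanTriple
    linarith
  have hcop : IsCoprime (u ^ 2 - v ^ 2) (2 * v ^ 2) := by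
    refine IsCoprime.mul_right ?_ ?_
    · exact isCoprime_two_of_odd hodd
    · have : IsCoprime (v ^ 2) (u ^ 2 + v ^ 2 * (-1)) :=
        (huv.symm.pow (m := 2) (n := 2)).add_mul_left_right _
      rw [show u ^ 2 + v ^ 2 * (-1) = u ^ 2 - v ^ 2 by ring] at this
      exact this.symm
  obtain ⟨m, n, h1, h2, h3, h4, -, -⟩ := hpyth.coprime_classification'
    (Int.isCoprime_iff_gcd_eq_one.mp hcop) (Int.odd_iff.mp hodd) hM
  have hmn : IsCoprime m n := Int.isCoprime_iff_gcd_eq_one.mpr h4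
  obtain ⟨b, hb⟩ := Int.sq_of_isCoprime hmn (show m * n = v ^ 2 by linarith)
  obtain ⟨a, ha⟩ := Int.sq_of_isCoprime hmn.symm (show n * m = v ^ 2 by linarith)
  have ha2 : n ^ 2 = a ^ 4 := by rcases ha with h | h <;> rw [h] <;> ring
  have hb2 : m ^ 2 = b ^ 4 := by rcases hb with h | h <;> rw [h] <;> ring
  have hvab : v ^ 2 = b ^ 2 * a ^ 2 := by
    refine (sq_eq_sq₀ (by positivity) (by positivity)).mp ?_
    calc (v ^ 2) ^ 2 = m ^ 2 * n ^ 2 := by rw [show v ^ 2 = m * n by linarith]; ring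
      _ = _ := by rw [ha2, hb2]; ring
  refine ⟨a, b, u, ?_, ?_, ?_, ?_, hMo⟩
  · have := hmn.pow (m := 2) (n := 2)
    rw [ha2, hb2] at this
    exact (IsCoprime.pow_iff (by norm_num) (by norm_num)).mp this
  · linear_combination h1 + hvab + hb2 - ha2
  · rintro rfl
    have hv : v = 0 := by simpa using hvab
    have : f = 0 := by simpa [hv] using hp.symm
    simp [this]
  · linear_combination h3 + ha2 + hb2

lemma quartic_aux (k : ℕ) : ∀ M e N : ℤ, M.natAbs = k → IsCoprime M e →
    N ^ 2 = M ^ 4 + M ^ 2 * e ^ 2 - e ^ 4 → e = 0 ∨ M ^ 2 = e ^ 2 := by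
  induction k using Nat.strong_induction_on with
  | _ k ih =>
  intro M e N hk hc h
  wlog hM : 0 ≤ M generalizing M
  · have := this (-M) (by simpa using hk) hc.neg_left (by rw [h]; ring) (by omega)
    simpa using this
  rcases hM.eq_or_lt with rfl | hM
  · left
    have : e ^ 4 ≤ 0 := by nlinarith [sq_nonneg N]
    exact pow_eq_zero_iff (n := 4) (by norm_num) |>.mp (le_antisymm this (by positivity))
  -- The new solution is strictly smaller whenever `a⁴ + b⁴ ≤ 2M` and `M ≠ 1`.
  have hlt : ∀ a b : ℤ, M ≠ 1 → a ^ 4 + b ^ 4 ≤ 2 * M → b.natAbs < k := by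
    intro a b h1 hab
    rw [← hk]
    by_contra hcon
    have hMb : M ≤ |b| := by rw [Int.abs_eq_natAbs]; omega
    have h2 : 2 ≤ |b| := by omega
    have h4 : b ^ 4 = |b| ^ 4 := by rw [← abs_pow, abs_of_nonneg (by positivity)]
    have ha : 0 ≤ a ^ 4 := by positivity
    have h8 : 2 ^ 3 ≤ |b| ^ 3 := by gcongr
    nlinarith
  rcases Int.emod_two_eq_zero_or_one e with he | he
  · obtain ⟨a, b, c, hba, hq, ha0, hMab, hMo⟩ := descent_even hM hc he h
    left
    by_cases hM1 : M = 1
    · subst hM1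
      have h4 : e ^ 2 < 2 := by nlinarith [sq_nonneg N]
      have : e < 2 := by nlinarith
      have : -2 < e := by nlinarith
      omega
    · rcases ih b.natAbs (hlt a b hM1 (by omega)) b a c rfl hba hq with h0 | h0
      · exact ha0 h0
      · exfalso
        rw [show a ^ 4 + b ^ 4 = 2 * a ^ 4 by linear_combination (b ^ 2 + a ^ 2) * h0] at hMab
        rw [hMab, Int.odd_iff] at hMo
        omega
  · obtain ⟨a, b, c, hba, hq, ha0, hMab⟩ := descent_odd hM hc he h
    right
    by_cases hM1 : M = 1
    · subst hM1
      have h4 : e ^ 2 < 2 := by nlinarith [sq_nonneg N]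
      have : e < 2 := by nlinarith
      have : -2 < e := by nlinarith
      obtain rfl | rfl : e = 1 ∨ e = -1 := by omega
      all_goals norm_num
    · rcases ih b.natAbs (hlt a b hM1 (by omega)) b a c rfl hba hq with h0 | h0
      · exact absurd h0 ha0
      · exfalso
        have hu : IsUnit (a ^ 2) := by
          have := hba.pow (m := 2) (n := 2)
          rw [h0] at this
          exact isCoprime_self.mp this
        have h1 : a ^ 2 = 1 := by
          rcases Int.isUnit_iff.mp hu with h | h
          · exact h
          · nlinarith [sq_nonneg a]
        rw [h1] at h0
        apply hM1
        have : 2 * M = 2 := by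
          linear_combination hMab + (a ^ 2 + 1) * h1 + (b ^ 2 + 1) * h0
        omega

lemma quartic {M e N : ℤ} (hc : IsCoprime M e)
    (h : N ^ 2 = M ^ 4 + M ^ 2 * e ^ 2 - e ^ 4) : e = 0 ∨ M ^ 2 = e ^ 2 :=
  quartic_aux _ M e N rfl hc h

/-! ### Rational points on the cubic -/

/-- `y² = x(x² + x - 1)` in integers, with `x = m / n` in lowest terms. -/
lemma cubic_int {m n y : ℤ} (hn : 0 < n) (hc : IsCoprime m n)
    (h : y ^ 2 = m * n * (m ^ 2 + m * n - n ^ 2)) : m = 0 ∨ m = n ∨ m = -n := by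
  have hmQ : IsCoprime m (m ^ 2 + m * n - n ^ 2) := by
    have := (hc.pow_right (n := 2)).neg_right.add_mul_left_right (m + n)
    rwa [show -n ^ 2 + m * (m + n) = m ^ 2 + m * n - n ^ 2 by ring] at this
  have hnQ : IsCoprime n (m ^ 2 + m * n - n ^ 2) := by
    have := (hc.symm.pow_right (n := 2)).add_mul_left_right (m - n)
    rwa [show m ^ 2 + n * (m - n) = m ^ 2 + m * n - n ^ 2 by ring] at this
  obtain ⟨e, he⟩ := Int.sq_of_isCoprime (hc.symm.mul_right hnQ)
    (show n * (m * (m ^ 2 + m * n - n ^ 2)) = y ^ 2 by rw [h]; ring)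
  replace he : n = e ^ 2 := he.resolve_right (by nlinarith [sq_nonneg e])
  obtain ⟨M, hM⟩ := Int.sq_of_isCoprime (hc.mul_right hmQ)
    (show m * (n * (m ^ 2 + m * n - n ^ 2)) = y ^ 2 by rw [h]; ring)
  by_cases hm0 : m = 0
  · exact Or.inl hm0
  have he0 : e ≠ 0 := by rintro rfl; simp [he] at hn
  have hM0 : M ≠ 0 := by rintro rfl; simp at hM; exact hm0 hM
  have hMe : IsCoprime M e := by
    have h2 : IsCoprime (M ^ 2) (e ^ 2) := by
      rw [← he]
      rcases hM with hM | hM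
      · rw [← hM]; exact hc
      · rw [show M ^ 2 = -m by rw [hM]; ring]; exact hc.neg_left
    exact (IsCoprime.pow_iff (by norm_num) (by norm_num)).mp h2
  have key : ∀ q : ℤ, y ^ 2 = (M * e) ^ 2 * q → ∃ N : ℤ, N ^ 2 = q := by
    intro q hq
    obtain ⟨N, rfl⟩ : M * e ∣ y := (Int.pow_dvd_pow_iff (by norm_num : 2 ≠ 0)).mp ⟨q, hq⟩
    refine ⟨N, mul_left_cancel₀ (pow_ne_zero 2 (mul_ne_zero hM0 he0)) ?_⟩
    rw [← hq]; ring
  right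
  rcases hM with hM | hM
  · left
    obtain ⟨N, hN⟩ := key (M ^ 4 + M ^ 2 * e ^ 2 - e ^ 4) (by rw [h, hM, he]; ring)
    rw [hM, he]
    exact (quartic hMe hN).resolve_left he0
  · right
    obtain ⟨N, hN⟩ := key (e ^ 4 + e ^ 2 * M ^ 2 - M ^ 4) (by rw [h, hM, he]; ring)
    rw [hM, he, (quartic hMe.symm hN).resolve_left hM0]

lemma cubic_rat {x y : ℚ} (h : y ^ 2 = x * (x ^ 2 + x - 1)) : x = 0 ∨ x = 1 ∨ x = -1 := by
  have hd : (x.den : ℚ) ≠ 0 := by exact_mod_cast x.den_nz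
  have hx : x * x.den = x.num := Rat.mul_den_eq_num x
  -- `y * n²` is a rational number with integral square, hence an integer.
  have hsq : (y * x.den ^ 2) ^ 2 =
      ((x.num * x.den * (x.num ^ 2 + x.num * x.den - x.den ^ 2) : ℤ) : ℚ) := by
    push_cast
    rw [← hx, mul_pow, h]
    ring
  obtain ⟨z, hz⟩ : ∃ z : ℤ, (z : ℚ) = y * x.den ^ 2 := by
    have hint : IsIntegral ℤ (y * (x.den : ℚ) ^ 2) := by
      refine IsIntegral.of_pow (n := 2) (by norm_num) ?_
      rw [hsq]
      exact isIntegral_algebraMap (R := ℤ) (A := ℚ)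
    obtain ⟨z, hz⟩ := IsIntegrallyClosed.isIntegral_iff.mp hint
    exact ⟨z, by simpa using hz⟩
  rw [← hz] at hsq
  have hcop : IsCoprime x.num (x.den : ℤ) := by
    rw [Int.isCoprime_iff_gcd_eq_one]
    exact x.reduced
  have hx' : x = x.num / x.den := (Rat.num_div_den x).symm
  rcases cubic_int (by exact_mod_cast x.den_pos) hcop (by exact_mod_cast hsq) with h0 | h0 | h0
  · left; rw [hx', h0]; simp
  · right; left; rw [hx', h0]; simp
  · right; right; rw [hx', h0]; push_cast; field_simp

theorem stmt_6 :
    {p : ℚ × ℚ | p.2 ^ 2 = p.1 ^ 3 - 108 * p.1 + 297} =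
      {((3 : ℚ), (0 : ℚ)), (-6, 27), (-6, -27), (12, 27), (12, -27)} := by
  ext ⟨V, U⟩
  simp only [Set.mem_ofPred_eq, Set.mem_insert_iff, Set.mem_singleton_iff, Prod.mk.injEq]
  constructor
  · intro h
    have hx : (U / 27) ^ 2 = (V - 3) / 9 * (((V - 3) / 9) ^ 2 + (V - 3) / 9 - 1) := by
      linear_combination h / 729
    have h27 : U ^ 2 = 27 ^ 2 → U = 27 ∨ U = -27 := sq_eq_sq_iff_eq_or_eq_neg.mp
    rcases cubic_rat hx with h0 | h0 | h0
    · obtain rfl : V = 3 := by linarith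
      left
      refine ⟨rfl, ?_⟩
      norm_num at h
      exact h
    · obtain rfl : V = 12 := by linarith
      rcases h27 (by rw [h]; norm_num) with rfl | rfl <;> simp
    · obtain rfl : V = -6 := by linarith
      rcases h27 (by rw [h]; norm_num) with rfl | rfl <;> simp
  · rintro (⟨rfl, rfl⟩ | ⟨rfl, rfl⟩ | ⟨rfl, rfl⟩ | ⟨rfl, rfl⟩ | ⟨rfl, rfl⟩) <;> norm_num
end

section
/- The set of rational solutions (V, U) of the equation U² = V³ + 54·V + 189 is exactly {(−3, 0), (6, 27), (6, −27)}. -/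
/-!
Translating the 2-torsion point to the origin and scaling, `V = 9 X - 3`, `U = 27 Y`, turns the
curve into `Y² = X (X² - X + 1)`. If `X = s / t ≠ 0` in lowest terms, then
`s t (s² - s t + t²)` is an integer square with pairwise coprime positive factors, so `s = M²`,
`t = e²` and `M⁴ - M² e² + e⁴ = N²`. It remains to show that `M² = e²`, which forces `X = 1`.

The quartic says that `(M² - e², M e, N)` is a primitive Pythagorean triple.

* If `M e` is even, `quartic_even_false` runs an infinite descent. Parametrizing the triple gives
  `M² - e² = p² - q²`, `M e = 2 p q`. Writing `M = 2 a b`, `e = c d`, `p = a c`, `q = b d` leads to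
  `a² + d² = b²` and `4 a² + d² = c²`; parametrizing these two triples yields
  `u v = 2 r s`, `u² - v² = r² - s²`, hence `u⁴ - u² v² + v⁴ = b²` with `u v = a` even,
  and `|b| < N`.
* If `M` and `e` are odd, parametrizing the triple as `M e = p² - q²`, `M² - e² = 2 p q` gives
  `p⁴ - p² q² + q⁴ = ((M² + e²) / 2)²` with `p q` even, so `p q = 0` by the first case.
-/

lemma isCoprime_sq_sub_sq_mul {M e : ℤ} (h : IsCoprime M e) :
    IsCoprime (M ^ 2 - e ^ 2) (M * e) := by
  have h1 : IsCoprime (M ^ 2 - e ^ 2) M := by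
    obtain ⟨u, v, huv⟩ : IsCoprime M (e ^ 2) := h.pow_right
    exact ⟨-v, u + v * M, by linear_combination huv⟩
  have h2 : IsCoprime (M ^ 2 - e ^ 2) e := by
    obtain ⟨u, v, huv⟩ : IsCoprime (M ^ 2) e := h.pow_left
    exact ⟨u, v + u * e, by linear_combination huv⟩
  exact h1.mul_right h2

/-- First half of the descent step: a solution with `M` even yields two Pythagorean triples sharing
the odd leg `d`, with other legs `a` and `2 a`, the hypotenuse of the first being less than `N`. -/
lemma exists_pair_of_triples {M e N : ℤ} (hc : IsCoprime M e) (hM : M % 2 = 0) (he : e % 2 = 1)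
    (hM0 : M ≠ 0) (hN : 0 < N) (h : M ^ 4 - M ^ 2 * e ^ 2 + e ^ 4 = N ^ 2) :
    ∃ a b c d : ℤ, IsCoprime a d ∧ d % 2 = 1 ∧ a ≠ 0 ∧ a ^ 2 + d ^ 2 = b ^ 2 ∧
      4 * a ^ 2 + d ^ 2 = c ^ 2 ∧ |b| < N := by
  have htrip : PythagoreanTriple (M ^ 2 - e ^ 2) (M * e) N := by
    unfold PythagoreanTriple; linear_combination h
  have hodd : (M ^ 2 - e ^ 2) % 2 = 1 := by
    simp [pow_two, Int.sub_emod, Int.mul_emod, hM, he]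
  obtain ⟨p, q, hpq1, hpq2, hpqN, hpqc, -, -⟩ := htrip.coprime_classification'
    (Int.isCoprime_iff_gcd_eq_one.mp (isCoprime_sq_sub_sq_mul hc)) hodd hN
  rw [← Int.isCoprime_iff_gcd_eq_one] at hpqc
  obtain ⟨m, rfl⟩ : (2 : ℤ) ∣ M := Int.dvd_of_emod_eq_zero hM
  have hme : m * e = p * q := by linarith
  have hm0 : m ≠ 0 := by rintro rfl; simp at hM0
  obtain ⟨a, b, ⟨c, rfl⟩, ⟨d, rfl⟩, rfl⟩ := exists_dvd_and_dvd_of_dvd_mul (Dvd.intro _ hme)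
  obtain rfl : e = c * d := by
    apply mul_left_cancel₀ hm0
    linear_combination hme
  have ha0 : a ≠ 0 := left_ne_zero_of_mul hm0
  have hb0 : b ≠ 0 := right_ne_zero_of_mul hm0
  have had : IsCoprime a d :=
    (hc.of_isCoprime_of_dvd_left ⟨2 * b, by ring⟩).of_isCoprime_of_dvd_right ⟨c, by ring⟩
  have hbc : IsCoprime b c :=
    (hpqc.symm.of_isCoprime_of_dvd_left ⟨d, rfl⟩).of_isCoprime_of_dvd_right ⟨a, by ring⟩
  have hd : d % 2 = 1 := by
    rcases Int.emod_two_eq_zero_or_one d with h0 | h1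
    · simp [Int.mul_emod, h0] at he
    · exact h1
  have hcodd : c % 2 = 1 := by
    rcases Int.emod_two_eq_zero_or_one c with h0 | h1
    · simp [Int.mul_emod, h0] at he
    · exact h1
  have hd0 : d ≠ 0 := by rintro rfl; simp at hd
  have hc0 : c ≠ 0 := by rintro rfl; simp at hcodd
  have hrel : a ^ 2 * (4 * b ^ 2 - c ^ 2) = d ^ 2 * (c ^ 2 - b ^ 2) := by
    linear_combination hpq1
  have hdvd : a ^ 2 ∣ c ^ 2 - b ^ 2 :=
    (had.pow (m := 2) (n := 2)).dvd_of_dvd_mul_left ⟨_, hrel.symm⟩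
  obtain ⟨k, hk1⟩ := hdvd
  have hk2 : 4 * b ^ 2 - c ^ 2 = d ^ 2 * k := by
    apply mul_left_cancel₀ (pow_ne_zero 2 ha0)
    linear_combination hrel + d ^ 2 * hk1
  -- `k` divides `3 b²` and `3 c²`, hence `3`.
  have hk3 : k ∣ 3 := by
    obtain ⟨u, v, huv⟩ : IsCoprime (b ^ 2) (c ^ 2) := hbc.pow
    exact ⟨u * (a ^ 2 + d ^ 2) + v * (4 * a ^ 2 + d ^ 2), by
      linear_combination (-3) * huv + (u + 4 * v) * hk1 + (u + v) * hk2⟩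
  have hkpos : 0 < k := by
    have h1 : 0 < a ^ 2 + d ^ 2 := by positivity
    have h2 : 0 < (a ^ 2 + d ^ 2) * k := by
      have : 0 < b ^ 2 := by positivity
      nlinarith
    exact (mul_pos_iff_of_pos_left h1).mp h2
  have hkle : k ≤ 3 := Int.le_of_dvd (by norm_num) hk3
  have hk : k = 3 := by
    interval_cases k
    · -- `3 b² = a² + d²` is impossible modulo `4`, as `d` is odd.
      exfalso
      have h3 : 3 * b ^ 2 = a ^ 2 + d ^ 2 := by linarith
      have hd4 : d ^ 2 % 4 = 1 := Int.sq_mod_four_eq_one_of_odd (Int.odd_iff.mpr hd)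
      have hsq : ∀ x : ℤ, x ^ 2 % 4 = 0 ∨ x ^ 2 % 4 = 1 := fun x => by
        rcases Int.even_or_odd x with hx | hx
        · obtain ⟨y, rfl⟩ := hx
          left
          ring_nf
          omega
        · exact .inr (Int.sq_mod_four_eq_one_of_odd hx)
      have := hsq a
      have := hsq b
      omega
    · norm_num at hk3
    · rfl
  subst hk
  refine ⟨a, b, c, d, had, hd, ha0, by linarith, by linarith, ?_⟩
  have h1 : 0 < (a * c) ^ 2 := by positivity
  have h2 : |b| ≤ b ^ 2 := by
    rw [← sq_abs]
    have : 1 ≤ |b| := Int.one_le_abs hb0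
    nlinarith
  have h3 : b ^ 2 ≤ (b * d) ^ 2 := by
    have : 1 ≤ d ^ 2 := Int.add_one_le_of_lt (show 0 < d ^ 2 by positivity)
    rw [mul_pow]
    nlinarith [sq_nonneg b]
  linarith

/-- Infinite descent on `|N|`: the quartic has no coprime solution with `M ≠ 0` even and `e` odd. -/
lemma quartic_even_false (n : ℕ) : ∀ {M e N : ℤ}, N.natAbs = n → IsCoprime M e → M % 2 = 0 →
    e % 2 = 1 → M ≠ 0 → M ^ 4 - M ^ 2 * e ^ 2 + e ^ 4 = N ^ 2 → False := by
  induction n using Nat.strong_induction_on with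
  | _ n ih =>
  intro M e N hn hc hM he hM0 h
  have he0 : e ≠ 0 := by rintro rfl; simp at he
  have hN0 : N ≠ 0 := by
    rintro rfl
    have : 0 < (M * e) ^ 2 := by positivity
    nlinarith [sq_nonneg (M ^ 2 - e ^ 2)]
  obtain ⟨a, b, c, d, had, hd, ha0, hb, hc', hlt⟩ := exists_pair_of_triples hc hM he hM0
    (abs_pos.mpr hN0) (h.trans (sq_abs N).symm)
  have hd0 : d ≠ 0 := by rintro rfl; simp at hd
  have hb0 : b ≠ 0 := by
    rintro rfl
    have : 0 < a ^ 2 + d ^ 2 := by positivity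
    simp [hb] at this
  have hc0 : c ≠ 0 := by
    rintro rfl
    have : 0 < 4 * a ^ 2 + d ^ 2 := by positivity
    simp [hc'] at this
  have ht1 : PythagoreanTriple d a |b| := by
    unfold PythagoreanTriple; rw [abs_mul_abs_self]; linear_combination hb
  have ht2 : PythagoreanTriple d (2 * a) |c| := by
    unfold PythagoreanTriple; rw [abs_mul_abs_self]; linear_combination hc'
  have hd2 : IsCoprime d 2 := (Int.isCoprime_two_right).mpr (Int.odd_iff.mpr hd)
  obtain ⟨r, s, h1, h2, h3, -, -, -⟩ := ht1.coprime_classification'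
    (Int.isCoprime_iff_gcd_eq_one.mp had.symm) hd (abs_pos.mpr hb0)
  obtain ⟨u, v, g1, g2, -, g4, g5, -⟩ := ht2.coprime_classification'
    (Int.isCoprime_iff_gcd_eq_one.mp (hd2.mul_right had.symm)) hd (abs_pos.mpr hc0)
  rw [← Int.isCoprime_iff_gcd_eq_one] at g4
  have huv : a = u * v := by linarith
  have hu0 : u ≠ 0 := by rintro rfl; simp [huv] at ha0
  have hv0 : v ≠ 0 := by rintro rfl; simp [huv] at ha0
  have hnew : u ^ 4 - u ^ 2 * v ^ 2 + v ^ 4 = b ^ 2 := by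
    rw [← hb, huv, g1]; ring
  have hlt' : b.natAbs < n := by
    rw [← hn]
    exact Int.natAbs_lt_iff_sq_lt.mpr (sq_lt_sq.mpr hlt)
  rcases g5 with ⟨hu, hv⟩ | ⟨hu, hv⟩
  · exact ih _ hlt' rfl g4 hu hv hu0 hnew
  · exact ih _ hlt' rfl g4.symm hv hu hv0 (by linear_combination hnew)

/-- Every coprime solution of `M⁴ - M² e² + e⁴ = N²` with `M e ≠ 0` has `M = ± e`. -/
lemma quartic_trivial {M e N : ℤ} (hc : IsCoprime M e) (hM0 : M ≠ 0) (he0 : e ≠ 0)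
    (h : M ^ 4 - M ^ 2 * e ^ 2 + e ^ 4 = N ^ 2) : M ^ 2 = e ^ 2 := by
  rcases Int.emod_two_eq_zero_or_one M with hM | hM <;>
    rcases Int.emod_two_eq_zero_or_one e with he | he
  · have := (hc.of_isCoprime_of_dvd_left (Int.dvd_of_emod_eq_zero hM)).of_isCoprime_of_dvd_right
      (Int.dvd_of_emod_eq_zero he)
    norm_num [Int.isCoprime_iff_gcd_eq_one] at this
  · exact (quartic_even_false _ rfl hc hM he hM0 h).elim
  · exact (quartic_even_false _ (N := N) rfl hc.symm he hM he0 (by linear_combination h)).elim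
  · have hN0 : N ≠ 0 := by
      rintro rfl
      have : 0 < (M * e) ^ 2 := by positivity
      nlinarith [sq_nonneg (M ^ 2 - e ^ 2)]
    have ht : PythagoreanTriple (M * e) (M ^ 2 - e ^ 2) |N| := by
      unfold PythagoreanTriple; rw [abs_mul_abs_self]; linear_combination h
    obtain ⟨p, q, h1, h2, -, h4, h5, -⟩ := ht.coprime_classification'
      (Int.isCoprime_iff_gcd_eq_one.mp (isCoprime_sq_sub_sq_mul hc).symm)
      (by simp [Int.mul_emod, hM, he]) (abs_pos.mpr hN0)
    rw [← Int.isCoprime_iff_gcd_eq_one] at h4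
    -- `M² + e² = 2 (p q + e²)`, so `p q + e²` is the integer `(M² + e²) / 2`.
    have hnew : p ^ 4 - p ^ 2 * q ^ 2 + q ^ 4 = (p * q + e ^ 2) ^ 2 := by
      have h6 : (M * e) ^ 2 = (p ^ 2 - q ^ 2) ^ 2 := by rw [h1]
      linear_combination -h6 + e ^ 2 * h2
    rcases eq_or_ne p 0 with rfl | hp0
    · linarith
    rcases eq_or_ne q 0 with rfl | hq0
    · linarith
    rcases h5 with ⟨hp, hq⟩ | ⟨hp, hq⟩
    · exact (quartic_even_false _ rfl h4 hp hq hp0 hnew).elim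
    · exact (quartic_even_false _ (N := p * q + e ^ 2) rfl h4.symm hq hp hq0
        (by linear_combination hnew)).elim

lemma exists_sq_of_mul_eq_sq {x y z : ℤ} (h : IsCoprime x y) (hx : 0 < x) (hxy : x * y = z ^ 2) :
    ∃ w, x = w ^ 2 := by
  obtain ⟨w, hw | hw⟩ := Int.sq_of_isCoprime h hxy
  · exact ⟨w, hw⟩
  · nlinarith [sq_nonneg w]

/-- The affine rational points of `Y² = X³ - X² + X` have `X = 0` or `X = 1`. -/
lemma x_eq_zero_or_one {X Y : ℚ} (h : Y ^ 2 = X * (X ^ 2 - X + 1)) : X = 0 ∨ X = 1 := by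
  rcases eq_or_ne X 0 with hX | hX
  · exact .inl hX
  right
  have hXpos : 0 < X := by
    have h1 : 0 < X ^ 2 - X + 1 := by nlinarith [sq_nonneg (X - 1 / 2)]
    have h2 : 0 ≤ X := by
      by_contra! hneg
      nlinarith [sq_nonneg Y, mul_pos (neg_pos.mpr hneg) h1]
    exact lt_of_le_of_ne h2 hX.symm
  obtain ⟨s, hs⟩ : ∃ s, s = X.num := ⟨_, rfl⟩
  obtain ⟨t, ht⟩ : ∃ t : ℤ, t = X.den := ⟨_, rfl⟩
  have hspos : 0 < s := hs ▸ Rat.num_pos.mpr hXpos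
  have htpos : 0 < t := by rw [ht]; exact_mod_cast X.den_pos
  have hst : IsCoprime s t := by
    rw [Int.isCoprime_iff_gcd_eq_one, hs, ht]; exact X.reduced
  have hXst : X * t = s := by
    rw [hs, ht]; exact_mod_cast Rat.mul_den_eq_num X
  obtain ⟨w, hw⟩ : IsSquare (s * t * (s ^ 2 - s * t + t ^ 2)) := by
    rw [← Rat.isSquare_intCast_iff]
    refine ⟨Y * t ^ 2, ?_⟩
    push_cast
    rw [← hXst]
    linear_combination (-(t : ℚ) ^ 4) * h
  rw [← pow_two] at hw
  have hcop : IsCoprime (s * t) (s ^ 2 - s * t + t ^ 2) := by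
    have h1 : IsCoprime s (s ^ 2 - s * t + t ^ 2) := by
      obtain ⟨u, v, huv⟩ : IsCoprime s (t ^ 2) := hst.pow_right
      exact ⟨u - v * (s - t), v, by linear_combination huv⟩
    have h2 : IsCoprime t (s ^ 2 - s * t + t ^ 2) := by
      obtain ⟨u, v, huv⟩ : IsCoprime t (s ^ 2) := hst.symm.pow_right
      exact ⟨u - v * (t - s), v, by linear_combination huv⟩
    exact h1.mul_left h2
  have hqpos : 0 < s ^ 2 - s * t + t ^ 2 := by nlinarith [sq_nonneg (s - t), mul_pos hspos htpos]
  obtain ⟨z, hz⟩ := exists_sq_of_mul_eq_sq hcop (by positivity) hw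
  obtain ⟨N, hN⟩ := exists_sq_of_mul_eq_sq hcop.symm hqpos ((mul_comm _ _).trans hw)
  obtain ⟨M, hM⟩ := exists_sq_of_mul_eq_sq hst hspos hz
  obtain ⟨e, he⟩ := exists_sq_of_mul_eq_sq hst.symm htpos ((mul_comm _ _).trans hz)
  have hMe : IsCoprime M e := by
    rw [hM, he] at hst
    exact (IsCoprime.pow_iff two_pos two_pos).mp hst
  have hM0 : M ≠ 0 := by rintro rfl; simp [hM] at hspos
  have he0 : e ≠ 0 := by rintro rfl; simp [he] at htpos
  have heq : s = t := by
    rw [hM, he]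
    refine quartic_trivial (N := N) hMe hM0 he0 ?_
    rw [← hN, hM, he]; ring
  rw [heq] at hXst
  have ht0 : (t : ℚ) ≠ 0 := by exact_mod_cast htpos.ne'
  exact (mul_eq_right₀ ht0).mp hXst

theorem stmt_7 :
    {p : ℚ × ℚ | p.2 ^ 2 = p.1 ^ 3 + 54 * p.1 + 189} =
      {((-3 : ℚ), (0 : ℚ)), (6, 27), (6, -27)} := by
  ext ⟨V, U⟩
  simp only [Set.mem_ofPred_eq, Set.mem_insert_iff, Set.mem_singleton_iff, Prod.mk.injEq]
  constructor
  · intro h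
    rcases x_eq_zero_or_one (X := (V + 3) / 9) (Y := U / 27)
      (by linear_combination h / 729) with hX | hX
    · obtain rfl : V = -3 := by linarith
      refine .inl ⟨rfl, ?_⟩
      norm_num at h
      exact h
    · obtain rfl : V = 6 := by linarith
      right
      have : (U - 27) * (U + 27) = 0 := by linear_combination h
      rcases mul_eq_zero.mp this with h' | h'
      · exact .inl ⟨rfl, by linarith⟩
      · exact .inr ⟨rfl, by linarith⟩
  · rintro (⟨rfl, rfl⟩ | ⟨rfl, rfl⟩ | ⟨rfl, rfl⟩) <;> norm_num
end

section
/- Let a, b, c, y, z be rational numbers with abc ≠ 0 and 2y − z ≠ 0, and set f(t) = a·t² + b·t + c and x = y·z/(2y − z) (so that (x + y)·z = 2·x·y). Then (f(x) + f(y))·f(z) = 2·f(x)·f(y) if and only if (y − z)²·(a²·y²·z² − 2·a·c·y² − 2·a·c·y·z + a·c·z² − 2·b·c·y + b·c·z) = 0. -/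
theorem stmt_9 (a b c y z : ℚ) (habc : a * b * c ≠ 0) (hyz : 2 * y - z ≠ 0) :
    let f : ℚ → ℚ := fun t => a * t ^ 2 + b * t + c
    let x : ℚ := y * z / (2 * y - z)
    ((f x + f y) * f z = 2 * f x * f y ↔
      (y - z) ^ 2 * (a ^ 2 * y ^ 2 * z ^ 2 - 2 * a * c * y ^ 2 - 2 * a * c * y * z
        + a * c * z ^ 2 - 2 * b * c * y + b * c * z) = 0) := by
  intro f x
  -- The defect of the harmonic-mean equation for `f x, f y, f z` is the stated polynomial
  -- times the nonzero factor `2 / (2 * y - z) ^ 2`.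
  have key : (f x + f y) * f z - 2 * f x * f y = 2 / (2 * y - z) ^ 2 *
      ((y - z) ^ 2 * (a ^ 2 * y ^ 2 * z ^ 2 - 2 * a * c * y ^ 2 - 2 * a * c * y * z
        + a * c * z ^ 2 - 2 * b * c * y + b * c * z)) := by
    -- Naming the denominator `w` lets `field_simp` recognise it as nonzero.
    obtain ⟨w, hw⟩ : ∃ w, w = 2 * y - z := ⟨_, rfl⟩
    obtain rfl : z = 2 * y - w := by linarith
    simp only [f, x, ← hw] at hyz ⊢
    field_simp
    ring
  have hfactor : 2 / (2 * y - z) ^ 2 ≠ 0 := div_ne_zero two_ne_zero (pow_ne_zero 2 hyz)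
  rw [← sub_eq_zero, key, mul_eq_zero, or_iff_right hfactor]
end

section
/- Let a, b, c, y, z be rational numbers with abc ≠ 0 and y ≠ 0 satisfying a²·y²·z² − 2·a·c·y² − 2·a·c·y·z + a·c·z² − 2·b·c·y + b·c·z = 0. Define X = c·(a²b·y²·z + a²c·y² + abc·z + b²c)/y² and Y = bc²·(a³·y³·z + a²b·y³ + a²b·y²·z + 2a²c·y² + a²c·y·z + abc·y + abc·z + b²c)/y³. Then Y² = X³ − 3·a⁴c⁴·X + a⁴c⁴·(2a²c² − 4ab²c + b⁴). -/
theorem stmt_10 (a b c y z : ℚ) (habc : a * b * c ≠ 0) (hy : y ≠ 0)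
    (hC : a ^ 2 * y ^ 2 * z ^ 2 - 2 * a * c * y ^ 2 - 2 * a * c * y * z
      + a * c * z ^ 2 - 2 * b * c * y + b * c * z = 0) :
    let X : ℚ := c * (a ^ 2 * b * y ^ 2 * z + a ^ 2 * c * y ^ 2 + a * b * c * z
      + b ^ 2 * c) / y ^ 2
    let Y : ℚ := b * c ^ 2 * (a ^ 3 * y ^ 3 * z + a ^ 2 * b * y ^ 3
      + a ^ 2 * b * y ^ 2 * z + 2 * a ^ 2 * c * y ^ 2 + a ^ 2 * c * y * z
      + a * b * c * y + a * b * c * z + b ^ 2 * c) / y ^ 3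
    Y ^ 2 = X ^ 3 - 3 * a ^ 4 * c ^ 4 * X
      + a ^ 4 * c ^ 4 * (2 * a ^ 2 * c ^ 2 - 4 * a * b ^ 2 * c + b ^ 4) := by
  intro X Y
  simp only [X, Y]
  field_simp
  -- After clearing `y ^ 6`, the difference of the two sides is divisible by the equation of `C₂`;
  -- the cofactor comes from polynomial division with respect to `z`.
  linear_combination (-a * b ^ 2 * c ^ 3 * (a * y ^ 2 + c) *
    (a * b * z * (a * y ^ 2 + c) + c * (2 * a ^ 2 * y ^ 2 + b ^ 2))) * hC
end

section
/- Let a, b, c, X, Y be rational numbers with abc ≠ 0, a⁴c⁴ − 2a³b²c³ − 2X·a²c² + X² ≠ 0, and a⁴c⁴ + 4a³b²c³ − 2X·a²c² + X² ≠ 0, satisfying Y² = X³ − 3·a⁴c⁴·X + a⁴c⁴·(2a²c² − 4ab²c + b⁴). Define y = b·c·(−a³c³ + a²b²c² + X·a·c + Y)/(a⁴c⁴ − 2a³b²c³ − 2X·a²c² + X²) and z = 2·b·c·(−2a³c³ − a²b²c² + 2X·a·c + Y)/(a⁴c⁴ + 4a³b²c³ − 2X·a²c² + X²). Then a²·y²·z²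 − 2·a·c·y² − 2·a·c·y·z + a·c·z² − 2·b·c·y + b·c·z = 0. -/
/-!
Put `u = a * c`, `B = b ^ 2` and `x = X - u ^ 2`. The curve `E₂` becomes
`Y ^ 2 = x ^ 2 * (x + 3 * u ^ 2) - 4 * u ^ 5 * B + u ^ 4 * B ^ 2`, the two denominators become
`D₁ = x ^ 2 - 2 * u ^ 3 * B` and `D₂ = x ^ 2 + 4 * u ^ 3 * B`, and `y = b * c * p / D₁`,
`z = 2 * b * c * q / D₂` with `p`, `q` monic of degree one in `Y`. Clearing denominators in the
equation of `C₂` and dividing by `(b * c) ^ 2` leaves a quartic polynomial in `Y`, which is a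
multiple of the equation of `E₂`; this divisibility is `numerator_eq_zero`.
-/

/-- The numerator of the equation of `C₂`, in the reduced parameters, vanishes on `E₂`. -/
lemma numerator_eq_zero (u B x Y p q D₁ D₂ : ℚ)
    (hp : p = u * x + u ^ 2 * B + Y) (hq : q = 2 * u * x - u ^ 2 * B + Y)
    (hD₁ : D₁ = x ^ 2 - 2 * u ^ 3 * B) (hD₂ : D₂ = x ^ 2 + 4 * u ^ 3 * B)
    (hE : Y ^ 2 = x ^ 2 * (x + 3 * u ^ 2) - 4 * u ^ 5 * B + u ^ 4 * B ^ 2) :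
    4 * u ^ 2 * B * p ^ 2 * q ^ 2 - 2 * u * p ^ 2 * D₂ ^ 2 - 4 * u * p * q * D₁ * D₂
      + 4 * u * q ^ 2 * D₁ ^ 2 - 2 * p * D₁ * D₂ ^ 2 + 2 * q * D₁ ^ 2 * D₂ = 0 := by
  subst hp hq hD₁ hD₂
  -- The cofactor is the quotient of the quartic in `Y` by `Y ^ 2 - f`, where `f` is the
  -- right-hand side of `hE`.
  linear_combination (4 * u ^ 2 * B * Y ^ 2 + 8 * u ^ 2 * B * (3 * u * x) * Y
    + 4 * u ^ 2 * B * ((u * x + u ^ 2 * B) ^ 2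
      + 4 * (u * x + u ^ 2 * B) * (2 * u * x - u ^ 2 * B) + (2 * u * x - u ^ 2 * B) ^ 2)
    - 2 * u * (x ^ 2 + 4 * u ^ 3 * B) ^ 2
    - 4 * u * (x ^ 2 - 2 * u ^ 3 * B) * (x ^ 2 + 4 * u ^ 3 * B)
    + 4 * u * (x ^ 2 - 2 * u ^ 3 * B) ^ 2
    + 4 * u ^ 2 * B * (x ^ 2 * (x + 3 * u ^ 2) - 4 * u ^ 5 * B + u ^ 4 * B ^ 2)) * hE

theorem stmt_11 (a b c X Y : ℚ) (habc : a * b * c ≠ 0)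
    (hd1 : a ^ 4 * c ^ 4 - 2 * a ^ 3 * b ^ 2 * c ^ 3 - 2 * X * a ^ 2 * c ^ 2
      + X ^ 2 ≠ 0)
    (hd2 : a ^ 4 * c ^ 4 + 4 * a ^ 3 * b ^ 2 * c ^ 3 - 2 * X * a ^ 2 * c ^ 2
      + X ^ 2 ≠ 0)
    (hE : Y ^ 2 = X ^ 3 - 3 * a ^ 4 * c ^ 4 * X
      + a ^ 4 * c ^ 4 * (2 * a ^ 2 * c ^ 2 - 4 * a * b ^ 2 * c + b ^ 4)) :
    let y : ℚ := b * c * (-(a ^ 3 * c ^ 3) + a ^ 2 * b ^ 2 * c ^ 2 + X * a * c + Y)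
      / (a ^ 4 * c ^ 4 - 2 * a ^ 3 * b ^ 2 * c ^ 3 - 2 * X * a ^ 2 * c ^ 2 + X ^ 2)
    let z : ℚ := 2 * b * c * (-(2 * a ^ 3 * c ^ 3) - a ^ 2 * b ^ 2 * c ^ 2
      + 2 * X * a * c + Y)
      / (a ^ 4 * c ^ 4 + 4 * a ^ 3 * b ^ 2 * c ^ 3 - 2 * X * a ^ 2 * c ^ 2 + X ^ 2)
    a ^ 2 * y ^ 2 * z ^ 2 - 2 * a * c * y ^ 2 - 2 * a * c * y * z + a * c * z ^ 2
      - 2 * b * c * y + b * c * z = 0 := by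
  intro y z
  have key := numerator_eq_zero (a * c) (b ^ 2) (X - (a * c) ^ 2) Y
    (-(a ^ 3 * c ^ 3) + a ^ 2 * b ^ 2 * c ^ 2 + X * a * c + Y)
    (-(2 * a ^ 3 * c ^ 3) - a ^ 2 * b ^ 2 * c ^ 2 + 2 * X * a * c + Y)
    (a ^ 4 * c ^ 4 - 2 * a ^ 3 * b ^ 2 * c ^ 3 - 2 * X * a ^ 2 * c ^ 2 + X ^ 2)
    (a ^ 4 * c ^ 4 + 4 * a ^ 3 * b ^ 2 * c ^ 3 - 2 * X * a ^ 2 * c ^ 2 + X ^ 2)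
    (by ring) (by ring) (by ring) (by ring) (by rw [hE]; ring)
  simp only [y, z]
  -- With numerators and denominators made opaque, clearing denominators leaves `key`
  -- times `(b * c) ^ 2`.
  generalize a ^ 4 * c ^ 4 - 2 * a ^ 3 * b ^ 2 * c ^ 3 - 2 * X * a ^ 2 * c ^ 2 + X ^ 2 = D₁ at *
  generalize a ^ 4 * c ^ 4 + 4 * a ^ 3 * b ^ 2 * c ^ 3 - 2 * X * a ^ 2 * c ^ 2 + X ^ 2 = D₂ at *
  generalize -(a ^ 3 * c ^ 3) + a ^ 2 * b ^ 2 * c ^ 2 + X * a * c + Y = p at *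
  generalize -(2 * a ^ 3 * c ^ 3) - a ^ 2 * b ^ 2 * c ^ 2 + 2 * X * a * c + Y = q at *
  calc _ = (b * c) ^ 2 * (4 * (a * c) ^ 2 * b ^ 2 * p ^ 2 * q ^ 2
        - 2 * (a * c) * p ^ 2 * D₂ ^ 2 - 4 * (a * c) * p * q * D₁ * D₂
        + 4 * (a * c) * q ^ 2 * D₁ ^ 2 - 2 * p * D₁ * D₂ ^ 2 + 2 * q * D₁ ^ 2 * D₂)
        / (D₁ ^ 2 * D₂ ^ 2) := by
        field_simp
        ring
    _ = 0 := by rw [key, mul_zero, zero_div]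
end

section
/- Let a, b, c be rational numbers with abc ≠ 0 and b² = 4ac, and let t be a rational number such that 68b²t² + 48bct² − 144c²t² + 4bct − 24c²t − c² ≠ 0 and 100b²t² − 192bct² + 144c²t² − 16bct + 24c²t + c² ≠ 0. Define y = 24ct·(2bt − 12ct − c)/(68b²t² + 48bct² − 144c²t² + 4bct − 24c²t − c²) and z = −48ct·(8bt − 12ct − c)/(100b²t² − 192bct² + 144c²t² − 16bct + 24c²t + c²). Then b³·y²·z² − 8·b·c²·y² − 8·b·c²·y·z + 4·b·c²·z² − 32·c³·y + 16·c³·z = 0. -/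
/-!
The point `(y, z)` is a value of a rational parametrization of the genus 0 curve. Since both
denominators are nonzero, the curve equation at `(y, z)` may be multiplied by the product of their
squares, and the resulting numerator vanishes identically as a polynomial in `b`, `c`, `t`.
-/

theorem stmt_12 (a b c t : ℚ) (habc : a * b * c ≠ 0) (hb : b ^ 2 = 4 * a * c)
    (h1 : 68 * b ^ 2 * t ^ 2 + 48 * b * c * t ^ 2 - 144 * c ^ 2 * t ^ 2
      + 4 * b * c * t - 24 * c ^ 2 * t - c ^ 2 ≠ 0)
    (h2 : 100 * b ^ 2 * t ^ 2 - 192 * b * c * t ^ 2 + 144 * c ^ 2 * t ^ 2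
      - 16 * b * c * t + 24 * c ^ 2 * t + c ^ 2 ≠ 0) :
    let y : ℚ := 24 * c * t * (2 * b * t - 12 * c * t - c)
      / (68 * b ^ 2 * t ^ 2 + 48 * b * c * t ^ 2 - 144 * c ^ 2 * t ^ 2
        + 4 * b * c * t - 24 * c ^ 2 * t - c ^ 2)
    let z : ℚ := -(48 * c * t * (8 * b * t - 12 * c * t - c))
      / (100 * b ^ 2 * t ^ 2 - 192 * b * c * t ^ 2 + 144 * c ^ 2 * t ^ 2
        - 16 * b * c * t + 24 * c ^ 2 * t + c ^ 2)
    b ^ 3 * y ^ 2 * z ^ 2 - 8 * b * c ^ 2 * y ^ 2 - 8 * b * c ^ 2 * y * z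
      + 4 * b * c ^ 2 * z ^ 2 - 32 * c ^ 3 * y + 16 * c ^ 3 * z = 0 := by
  intro y z
  -- Abstract denominators `D`, `E` keep the clearing of fractions small; the cleared equation
  -- is then a polynomial identity in `b`, `c`, `t`.
  have key : ∀ M N D E : ℚ, D ≠ 0 → E ≠ 0 →
      b ^ 3 * M ^ 2 * N ^ 2 - 8 * b * c ^ 2 * M ^ 2 * E ^ 2 - 8 * b * c ^ 2 * M * N * D * E
        + 4 * b * c ^ 2 * N ^ 2 * D ^ 2 - 32 * c ^ 3 * M * D * E ^ 2
        + 16 * c ^ 3 * N * D ^ 2 * E = 0 →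
      b ^ 3 * (M / D) ^ 2 * (N / E) ^ 2 - 8 * b * c ^ 2 * (M / D) ^ 2
        - 8 * b * c ^ 2 * (M / D) * (N / E) + 4 * b * c ^ 2 * (N / E) ^ 2
        - 32 * c ^ 3 * (M / D) + 16 * c ^ 3 * (N / E) = 0 := by
    intro M N D E hD hE h
    have heq : b ^ 3 * (M / D) ^ 2 * (N / E) ^ 2 - 8 * b * c ^ 2 * (M / D) ^ 2
        - 8 * b * c ^ 2 * (M / D) * (N / E) + 4 * b * c ^ 2 * (N / E) ^ 2
        - 32 * c ^ 3 * (M / D) + 16 * c ^ 3 * (N / E)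
        = (b ^ 3 * M ^ 2 * N ^ 2 - 8 * b * c ^ 2 * M ^ 2 * E ^ 2 - 8 * b * c ^ 2 * M * N * D * E
        + 4 * b * c ^ 2 * N ^ 2 * D ^ 2 - 32 * c ^ 3 * M * D * E ^ 2
        + 16 * c ^ 3 * N * D ^ 2 * E) / (D ^ 2 * E ^ 2) := by
      field_simp
    rw [heq, h, zero_div]
  exact key _ _ _ _ h1 h2 (by ring)
end

section
/- Let a, b, c, y, z be rational numbers with abc ≠ 0, y ≠ 0, z ≠ 0, 2y − z ≠ 0, and y·z ≠ 0, and set f(t) = a·t + b + c/t and x = y·z/(2y − z) with x ≠ 0 (so that (x + y)·z = 2·x·y). Then (f(x) + f(y))·f(z) = 2·f(x)·f(y) if and only if (y − z)²·(a·b·y²·z² + 3·a·c·y²·z − 2·c²·y + c²·z) = 0. -/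
theorem stmt_14 (a b c y z : ℚ) (habc : a * b * c ≠ 0) (hy : y ≠ 0) (hz : z ≠ 0)
    (hyz : 2 * y - z ≠ 0) (hyz' : y * z ≠ 0)
    (hx : y * z / (2 * y - z) ≠ 0) :
    let f : ℚ → ℚ := fun t => a * t + b + c / t
    let x : ℚ := y * z / (2 * y - z)
    ((f x + f y) * f z = 2 * f x * f y ↔
      (y - z) ^ 2 * (a * b * y ^ 2 * z ^ 2 + 3 * a * c * y ^ 2 * z - 2 * c ^ 2 * y
        + c ^ 2 * z) = 0) := by
  intro f x
  -- The two sides of the harmonic-mean equation differ by a nonzero multiple of the polynomial.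
  have key : (f x + f y) * f z - 2 * f x * f y =
      (-2 / ((2 * y - z) * y ^ 2 * z ^ 2)) *
        ((y - z) ^ 2 * (a * b * y ^ 2 * z ^ 2 + 3 * a * c * y ^ 2 * z - 2 * c ^ 2 * y
          + c ^ 2 * z)) := by
    simp only [f, x]
    -- Naming the denominator lets `field_simp` treat it as an atom; `z` is then eliminated.
    obtain ⟨w, hw⟩ : ∃ w, w = 2 * y - z := ⟨_, rfl⟩
    rw [← hw] at hyz ⊢
    field_simp
    obtain rfl : z = 2 * y - w := by linarith
    ring
  have hne : (-2 / ((2 * y - z) * y ^ 2 * z ^ 2)) ≠ 0 :=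
    div_ne_zero (by norm_num)
      (mul_ne_zero (mul_ne_zero hyz (pow_ne_zero 2 hy)) (pow_ne_zero 2 hz))
  rw [← sub_eq_zero, key, mul_eq_zero, or_iff_right hne]
end

section
/- Let a, b, c, y, z be rational numbers with abc ≠ 0 and y ≠ 0 satisfying a·b·y²·z² + 3·a·c·y²·z − 2·c²·y + c²·z = 0. Define X = c²·(a·b·y²·z + 2·a·c·y² + c²)/y² and Y = c⁴·(a·b·y³ + a·b·y²·z + 3·a·c·y² + c²)/y³. Then Y² = X³ − 3·a²c⁶·X − a²c⁸·(2ac − b²). -/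
theorem stmt_15 (a b c y z : ℚ) (habc : a * b * c ≠ 0) (hy : y ≠ 0)
    (hC : a * b * y ^ 2 * z ^ 2 + 3 * a * c * y ^ 2 * z - 2 * c ^ 2 * y
      + c ^ 2 * z = 0) :
    let X : ℚ := c ^ 2 * (a * b * y ^ 2 * z + 2 * a * c * y ^ 2 + c ^ 2) / y ^ 2
    let Y : ℚ := c ^ 4 * (a * b * y ^ 3 + a * b * y ^ 2 * z + 3 * a * c * y ^ 2
      + c ^ 2) / y ^ 3
    Y ^ 2 = X ^ 3 - 3 * a ^ 2 * c ^ 6 * X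
      - a ^ 2 * c ^ 8 * (2 * a * c - b ^ 2) := by
  intro X Y
  -- With `T = a b y² z + 3 a c y² + c²` the curve is `z T = 2 c² y`. Writing `Q = a c y²`,
  -- one has `y² X = c² (T - Q)` and `y³ Y = c⁴ (a b y³ + T)`; the factorization
  -- `(T - Q)³ - 3 Q² (T - Q) - 2 Q³ = (T - 3 Q) T²` then yields the cofactor below.
  have key : Y ^ 2 - (X ^ 3 - 3 * a ^ 2 * c ^ 6 * X - a ^ 2 * c ^ 8 * (2 * a * c - b ^ 2))
      = -(c ^ 6 * a * b * (a * b * y ^ 2 * z + 3 * a * c * y ^ 2 + c ^ 2) / y ^ 4)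
        * (a * b * y ^ 2 * z ^ 2 + 3 * a * c * y ^ 2 * z - 2 * c ^ 2 * y + c ^ 2 * z) := by
    simp only [X, Y]
    field_simp
    ring
  rw [hC, mul_zero] at key
  exact sub_eq_zero.mp key
end

section
/- Let a, b, c, X, Y be rational numbers with abc ≠ 0, X ≠ −ac³, and X ≠ 2ac³, satisfying Y² = X³ − 3·a²c⁶·X − a²c⁸·(2ac − b²). Define y = c²·(Y + abc⁴)/((X + ac³)·(X − 2ac³)) and z = 2·c²·(Y − abc⁴)/(X + ac³)². Then a·b·y²·z² + 3·a·c·y²·z − 2·c²·y + c²·z = 0. -/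
/-!
Put `P = X + ac³`, `Q = X - 2ac³`, `k = abc⁴`. The cubic factors so that the equation of the
elliptic curve reads `(Y + k)(Y - k) = P² Q`, whence `y z = 2c⁴ / P`. Substituting this, the
equation of the quartic becomes linear in `y` and `z`; since `Q = P - 3ac³`, its terms cancel.
-/

theorem stmt_16 (a b c X Y : ℚ) (habc : a * b * c ≠ 0)
    (hX1 : X ≠ -(a * c ^ 3)) (hX2 : X ≠ 2 * a * c ^ 3)
    (hE : Y ^ 2 = X ^ 3 - 3 * a ^ 2 * c ^ 6 * X
      - a ^ 2 * c ^ 8 * (2 * a * c - b ^ 2)) :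
    let y : ℚ := c ^ 2 * (Y + a * b * c ^ 4)
      / ((X + a * c ^ 3) * (X - 2 * a * c ^ 3))
    let z : ℚ := 2 * c ^ 2 * (Y - a * b * c ^ 4) / (X + a * c ^ 3) ^ 2
    a * b * y ^ 2 * z ^ 2 + 3 * a * c * y ^ 2 * z - 2 * c ^ 2 * y
      + c ^ 2 * z = 0 := by
  intro y z
  have hP : X + a * c ^ 3 ≠ 0 := fun h => hX1 (by linarith)
  have hQ : X - 2 * a * c ^ 3 ≠ 0 := fun h => hX2 (by linarith)
  have hyz : y * z = 2 * c ^ 4 / (X + a * c ^ 3) := by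
    simp only [y, z]
    rw [div_mul_div_comm, div_eq_div_iff (by positivity) hP]
    linear_combination 2 * c ^ 4 * (X + a * c ^ 3) * hE
  have hy : (X - 2 * a * c ^ 3) * y = c ^ 2 * (Y + a * b * c ^ 4) / (X + a * c ^ 3) := by
    simp only [y]
    rw [mul_div_assoc', div_eq_div_iff (by positivity) hP]
    ring
  have hz : z = 2 * c ^ 2 * (Y - a * b * c ^ 4) / (X + a * c ^ 3) ^ 2 := rfl
  clear_value y z
  generalize hPdef : X + a * c ^ 3 = P at *
  have hQP : X - 2 * a * c ^ 3 = P - 3 * a * c ^ 3 := by rw [← hPdef]; ring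
  rw [hQP, eq_div_iff hP] at hy
  rw [eq_div_iff hP] at hyz
  rw [eq_div_iff (pow_ne_zero 2 hP)] at hz
  have key : P ^ 2 * (a * b * y ^ 2 * z ^ 2 + 3 * a * c * y ^ 2 * z - 2 * c ^ 2 * y
      + c ^ 2 * z) = 0 := by
    linear_combination (a * b * (y * z * P + 2 * c ^ 4) + 3 * a * c * y * P) * hyz
      - 2 * c ^ 2 * hy + c ^ 2 * hz
  exact (mul_eq_zero.mp key).resolve_left (pow_ne_zero 2 hP)
end
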